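/- Let C be a cartesian category, p : E → B an arrow, and (P, leg, wk, proj, subst) a polynomial functor for p. Define, for each object (f : Y → B) of C/B, the arrow η_Y : Y → P(Y ×_B E) uniquely determined (via the isomorphism P(Y ×_B E) ≅ PY ×_{PB} PE, since P preserves pullbacks) by the equations P(π₁) ∘ η_Y = wk_Y ∘ (id_Y, f) and P(π₂) ∘ η_Y = proj ∘ f. Then η is natural in Y and satisfies the two triangle identities: P(subst_X) ∘ η_{PX} = id_{PX} for all X ∈ C, and subst_{Y ×_B E} ∘ (η_Y ×_B E) = id_{Y ×_B E} for all Y ∈ C/B. Consequently (P, leg) : C → C/B is right adjoint to (− ×_B E) : C/B → C with unit η and counit subst. -/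

import Mathlib

open CategoryTheory CategoryTheory.Limits

universe v u

variable {C : Type u} [Category.{v} C]

/-- A *polynomial functor for `p`*: a pullback-preserving endofunctor `P : C ⥤ C` equipped
with a natural transformation `leg_X : P X ⟶ B`, a natural transformation
`wk_X : X × B ⟶ P X` over `B`, an arrow `proj : B ⟶ P E` over `B`, and a natural
transformation `subst_X : P X ×_B E ⟶ X`, satisfying axioms (P1)–(P4).  Morphisms between
pullbacks (such as `proj ×_B E`, `wk_X ×_B E`, the functorial action of `P(−) ×_B E` on a
morphism, and the pairing used in (P4)) are characterized by their compositions with the two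
pullback projections. -/
structure IsPolynomialFor [HasFiniteLimits C] {E B : C} (p : E ⟶ B)
    (P : C ⥤ C) (leg : ∀ X : C, P.obj X ⟶ B) (wk : ∀ X : C, X ⨯ B ⟶ P.obj X)
    (proj : B ⟶ P.obj E) (subst : ∀ X : C, pullback (leg X) p ⟶ X) : Prop where
  /-- `P` preserves pullbacks. -/
  preserves : PreservesLimitsOfShape WalkingCospan P
  /-- `leg` is a natural transformation `P ⟹ B`. -/
  leg_natural : ∀ (X Y : C) (f : X ⟶ Y), P.map f ≫ leg Y = leg X
  /-- `wk` is a natural transformation `(− × B) ⟹ P`. -/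
  wk_natural : ∀ (X Y : C) (f : X ⟶ Y), prod.map f (𝟙 B) ≫ wk Y = wk X ≫ P.map f
  /-- `wk_X : X × B ⟶ P X` is a morphism over `B`. -/
  wk_over : ∀ X : C, wk X ≫ leg X = (prod.snd : X ⨯ B ⟶ B)
  /-- `proj : B ⟶ P E` is a morphism over `B`. -/
  proj_over : proj ≫ leg E = 𝟙 B
  /-- `subst` is a natural transformation `(P(−) ×_B E) ⟹ 𝟭 C`: for `f : X ⟶ Y`, composing
  the induced morphism `P X ×_B E ⟶ P Y ×_B E` (characterized by the two displayed equations)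
  with `subst Y` equals `subst X ≫ f`. -/
  subst_natural : ∀ (X Y : C) (f : X ⟶ Y) (u : pullback (leg X) p ⟶ pullback (leg Y) p),
    u ≫ pullback.fst (leg Y) p = pullback.fst (leg X) p ≫ P.map f →
    u ≫ pullback.snd (leg Y) p = pullback.snd (leg X) p →
    u ≫ subst Y = subst X ≫ f
  /-- (P1): `P p ∘ proj = wk_B ∘ Δ_B`. -/
  P1 : proj ≫ P.map p = prod.lift (𝟙 B) (𝟙 B) ≫ wk B
  /-- (P2): `subst_E ∘ (proj ×_B E)` is the canonical isomorphism `B ×_B E ≅ E` (the second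
  pullback projection), where `proj ×_B E : B ×_B E ⟶ P E ×_B E` is characterized by the two
  displayed equations. -/
  P2 : ∀ u : pullback (𝟙 B) p ⟶ pullback (leg E) p,
    u ≫ pullback.fst (leg E) p = pullback.fst (𝟙 B) p ≫ proj →
    u ≫ pullback.snd (leg E) p = pullback.snd (𝟙 B) p →
    u ≫ subst E = pullback.snd (𝟙 B) p
  /-- (P3): `subst_X ∘ (wk_X ×_B E)` is the projection `(X × B) ×_B E ≅ X × E ⟶ X`, where
  `wk_X ×_B E : (X × B) ×_B E ⟶ P X ×_B E` is characterized by the displayed equations. -/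
  P3 : ∀ (X : C) (u : pullback (prod.snd : X ⨯ B ⟶ B) p ⟶ pullback (leg X) p),
    u ≫ pullback.fst (leg X) p = pullback.fst (prod.snd : X ⨯ B ⟶ B) p ≫ wk X →
    u ≫ pullback.snd (leg X) p = pullback.snd (prod.snd : X ⨯ B ⟶ B) p →
    u ≫ subst X = pullback.fst (prod.snd : X ⨯ B ⟶ B) p ≫ (prod.fst : X ⨯ B ⟶ X)
  /-- (P4): `P(subst_X) ∘ (wk_{PX} ∘ (id_{PX}, leg_X), proj ∘ leg_X) = id_{PX}`, where the
  pairing `P X ⟶ P (P X ×_B E)` is characterized, via the isomorphism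
  `P (P X ×_B E) ≅ P P X ×_{P B} P E` coming from `P` preserving pullbacks, by its composites
  with `P` applied to the two pullback projections. -/
  P4 : ∀ (X : C) (u : P.obj X ⟶ P.obj (pullback (leg X) p)),
    u ≫ P.map (pullback.fst (leg X) p) = prod.lift (𝟙 (P.obj X)) (leg X) ≫ wk (P.obj X) →
    u ≫ P.map (pullback.snd (leg X) p) = leg X ≫ proj →
    u ≫ P.map (subst X) = 𝟙 (P.obj X)



/-- The functor `(P, leg) : C ⥤ C/B` determined by an endofunctor `P : C ⥤ C` and a natural
transformation `leg_X : P X ⟶ B`. -/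
@[simps]
def legFunctor {B : C} (P : C ⥤ C) (leg : ∀ X : C, P.obj X ⟶ B)
    (hleg : ∀ (X Y : C) (f : X ⟶ Y), P.map f ≫ leg Y = leg X) : C ⥤ Over B where
  obj X := Over.mk (leg X)
  map {X Y} f := Over.homMk (P.map f) (hleg X Y f)

/-- The property that a family `η_Y : Y ⟶ P (Y ×_B E)` (for `Y ∈ C/B`) is a natural
transformation making `(P, leg) : C ⥤ C/B` a right adjoint of `(− ×_B E) : C/B ⥤ C` with
unit `η` and counit `subst`: each `η_Y` is a morphism over `B`, `η` is natural in `Y`, and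
the two triangle identities hold.  In the second triangle identity, the morphism
`η_Y ×_B E : Y ×_B E ⟶ P (Y ×_B E) ×_B E` is characterized by its compositions with the two
pullback projections. -/
structure IsAdjointUnit [HasFiniteLimits C] {E B : C} (p : E ⟶ B)
    (P : C ⥤ C) (leg : ∀ X : C, P.obj X ⟶ B) (subst : ∀ X : C, pullback (leg X) p ⟶ X)
    (η : ∀ Y : Over B, Y.left ⟶ P.obj (pullback Y.hom p)) : Prop where
  /-- Each `η_Y` is a morphism `Y ⟶ (P (Y ×_B E), leg)` in `C/B`. -/
  over' : ∀ Y : Over B, η Y ≫ leg (pullback Y.hom p) = Y.hom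
  /-- `η` is natural in `Y ∈ C/B`. -/
  natural : ∀ (Y Z : Over B) (f : Y ⟶ Z),
    f.left ≫ η Z = η Y ≫ P.map ((Over.pullback p ⋙ Over.forget E).map f)
  /-- First triangle identity: `P (subst_X) ∘ η_{(P X, leg_X)} = id_{P X}`. -/
  triangle₁ : ∀ X : C, η (Over.mk (leg X)) ≫ P.map (subst X) = 𝟙 (P.obj X)
  /-- Second triangle identity: `subst_{Y ×_B E} ∘ (η_Y ×_B E) = id_{Y ×_B E}`. -/
  triangle₂ : ∀ (Y : Over B)
    (u : pullback Y.hom p ⟶ pullback (leg (pullback Y.hom p)) p),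
    u ≫ pullback.fst (leg (pullback Y.hom p)) p = pullback.fst Y.hom p ≫ η Y →
    u ≫ pullback.snd (leg (pullback Y.hom p)) p = pullback.snd Y.hom p →
    u ≫ subst (pullback Y.hom p) = 𝟙 (pullback Y.hom p)

/-- Let `C` be a cartesian category, `p : E ⟶ B` an arrow, and
`(P, leg, wk, proj, subst)` a polynomial functor for `p`.  For each `Y ∈ C/B` let
`η_Y : Y ⟶ P (Y ×_B E)` be the arrow uniquely determined (via the isomorphism
`P (Y ×_B E) ≅ P Y ×_{P B} P E`, since `P` preserves pullbacks) by the equations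
`P(π₁) ∘ η_Y = wk_Y ∘ (id_Y, f)` and `P(π₂) ∘ η_Y = proj ∘ f`.  Then `η` is natural in `Y`
and satisfies the two triangle identities (together with being over `B`, this is the statement
`IsAdjointUnit p P leg subst η`); consequently `(P, leg) : C ⥤ C/B` is right adjoint to
`(− ×_B E) : C/B ⥤ C` with unit `η` and counit `subst`. -/
theorem isAdjointUnit_of_isPolynomialFor
    {C : Type u} [Category.{v} C] [HasFiniteLimits C] {E B : C} (p : E ⟶ B)
    (P : C ⥤ C) (leg : ∀ X : C, P.obj X ⟶ B) (wk : ∀ X : C, X ⨯ B ⟶ P.obj X)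
    (proj : B ⟶ P.obj E) (subst : ∀ X : C, pullback (leg X) p ⟶ X)
    (h : IsPolynomialFor p P leg wk proj subst)
    (η : ∀ Y : Over B, Y.left ⟶ P.obj (pullback Y.hom p))
    (hη₁ : ∀ Y : Over B,
      η Y ≫ P.map (pullback.fst Y.hom p) = prod.lift (𝟙 Y.left) Y.hom ≫ wk Y.left)
    (hη₂ : ∀ Y : Over B, η Y ≫ P.map (pullback.snd Y.hom p) = Y.hom ≫ proj) :
    IsAdjointUnit p P leg subst η ∧
      ∃ adjn : (Over.pullback p ⋙ Over.forget E) ⊣ legFunctor P leg h.leg_natural,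
        (∀ Y : Over B, (adjn.unit.app Y).left = η Y) ∧
        (∀ X : C, adjn.counit.app X = subst X) := by
  have hpres := h.preserves
  have hext : ∀ (Y : Over B) {W : C} (a b : W ⟶ P.obj (pullback Y.hom p)),
      a ≫ P.map (pullback.fst Y.hom p) = b ≫ P.map (pullback.fst Y.hom p) →
      a ≫ P.map (pullback.snd Y.hom p) = b ≫ P.map (pullback.snd Y.hom p) → a = b := by
    intro Y W a b h1 h2
    exact ((IsPullback.of_hasPullback Y.hom p).map P).hom_ext h1 h2
  have hover : ∀ Y : Over B, η Y ≫ leg (pullback Y.hom p) = Y.hom := by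
    intro Y
    rw [← h.leg_natural _ _ (pullback.fst Y.hom p), ← Category.assoc, hη₁, Category.assoc,
      h.wk_over, prod.lift_snd]
  have hnat : ∀ (Y Z : Over B) (f : Y ⟶ Z),
      f.left ≫ η Z = η Y ≫ P.map ((Over.pullback p ⋙ Over.forget E).map f) := by
    intro Y Z f
    have key : ∀ g : pullback Y.hom p ⟶ pullback Z.hom p,
        g ≫ pullback.fst Z.hom p = pullback.fst Y.hom p ≫ f.left →
        g ≫ pullback.snd Z.hom p = pullback.snd Y.hom p →
        f.left ≫ η Z = η Y ≫ P.map g := by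
      intro g e1 e2
      apply hext
      · rw [Category.assoc, Category.assoc, hη₁, ← P.map_comp, e1,
          P.map_comp, ← Category.assoc (η Y), hη₁, Category.assoc, ← h.wk_natural,
          ← Category.assoc, ← Category.assoc]
        congr 1
        ext <;> simp
      · rw [Category.assoc, Category.assoc, hη₂, ← P.map_comp, e2,
          hη₂, ← Category.assoc, Over.w]
    exact key _ (pullback.lift_fst _ _ _) (pullback.lift_snd _ _ _)
  have ht1 : ∀ X : C, η (Over.mk (leg X)) ≫ P.map (subst X) = 𝟙 (P.obj X) := by
    intro X
    exact h.P4 X _ (hη₁ (Over.mk (leg X))) (hη₂ (Over.mk (leg X)))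
  have hact : ∀ {X Y : C} (f : X ⟶ Y),
      pullback.fst (leg X) p ≫ P.map f ≫ leg Y = pullback.snd (leg X) p ≫ p := by
    intro X Y f
    rw [h.leg_natural, pullback.condition]
  have ht2 : ∀ (Y : Over B)
      (u : pullback Y.hom p ⟶ pullback (leg (pullback Y.hom p)) p),
      u ≫ pullback.fst (leg (pullback Y.hom p)) p = pullback.fst Y.hom p ≫ η Y →
      u ≫ pullback.snd (leg (pullback Y.hom p)) p = pullback.snd Y.hom p →
      u ≫ subst (pullback Y.hom p) = 𝟙 (pullback Y.hom p) := by
    intro Y u hu1 hu2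
    apply pullback.hom_ext
    · let w : pullback (leg (pullback Y.hom p)) p ⟶ pullback (leg Y.left) p :=
        pullback.lift (pullback.fst _ p ≫ P.map (pullback.fst Y.hom p)) (pullback.snd _ p)
          (by rw [Category.assoc, hact])
      let k : pullback (prod.snd : Y.left ⨯ B ⟶ B) p ⟶ pullback (leg Y.left) p :=
        pullback.lift (pullback.fst _ p ≫ wk Y.left) (pullback.snd _ p)
          (by rw [Category.assoc, h.wk_over, pullback.condition])
      let m : pullback Y.hom p ⟶ pullback (prod.snd : Y.left ⨯ B ⟶ B) p :=
        pullback.lift (pullback.fst _ p ≫ prod.lift (𝟙 Y.left) Y.hom) (pullback.snd _ p)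
          (by rw [Category.assoc, prod.lift_snd, pullback.condition])
      have hw := h.subst_natural _ _ (pullback.fst Y.hom p) w
        (pullback.lift_fst _ _ _) (pullback.lift_snd _ _ _)
      have hk := h.P3 Y.left k (pullback.lift_fst _ _ _) (pullback.lift_snd _ _ _)
      have huw : u ≫ w = m ≫ k := by
        apply pullback.hom_ext
        · simp only [w, m, k, Category.assoc, pullback.lift_fst, pullback.lift_fst_assoc]
          rw [← Category.assoc u, hu1, Category.assoc, hη₁]
        · simp only [w, m, k, Category.assoc, pullback.lift_snd]
          exact hu2
      rw [Category.assoc, ← hw, ← Category.assoc, huw, Category.assoc, hk]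
      rw [Category.id_comp, ← Category.assoc]
      simp only [m]
      rw [pullback.lift_fst, Category.assoc, prod.lift_fst, Category.comp_id]
    · let w : pullback (leg (pullback Y.hom p)) p ⟶ pullback (leg E) p :=
        pullback.lift (pullback.fst _ p ≫ P.map (pullback.snd Y.hom p)) (pullback.snd _ p)
          (by rw [Category.assoc, hact])
      let k : pullback (𝟙 B) p ⟶ pullback (leg E) p :=
        pullback.lift (pullback.fst _ p ≫ proj) (pullback.snd _ p)
          (by rw [Category.assoc, h.proj_over, pullback.condition])
      let m : pullback Y.hom p ⟶ pullback (𝟙 B) p :=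
        pullback.lift (pullback.fst _ p ≫ Y.hom) (pullback.snd _ p)
          (by rw [Category.comp_id, pullback.condition])
      have hw := h.subst_natural _ _ (pullback.snd Y.hom p) w
        (pullback.lift_fst _ _ _) (pullback.lift_snd _ _ _)
      have hk := h.P2 k (pullback.lift_fst _ _ _) (pullback.lift_snd _ _ _)
      have huw : u ≫ w = m ≫ k := by
        apply pullback.hom_ext
        · simp only [w, m, k, Category.assoc, pullback.lift_fst, pullback.lift_fst_assoc]
          rw [← Category.assoc u, hu1, Category.assoc, hη₂]
        · simp only [w, m, k, Category.assoc, pullback.lift_snd]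
          exact hu2
      rw [Category.assoc, ← hw, ← Category.assoc, huw, Category.assoc, hk]
      rw [Category.id_comp]
      exact pullback.lift_snd _ _ _
  refine ⟨⟨hover, hnat, ht1, ht2⟩, ?_⟩
  let un : 𝟭 (Over B) ⟶
      (Over.pullback p ⋙ Over.forget E) ⋙ legFunctor P leg h.leg_natural :=
    { app := fun Y => Over.homMk (η Y) (hover Y)
      naturality := fun Y Z f => by
        apply Over.OverMorphism.ext
        exact hnat Y Z f }
  let co : legFunctor P leg h.leg_natural ⋙ (Over.pullback p ⋙ Over.forget E) ⟶ 𝟭 C :=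
    { app := fun X => subst X
      naturality := fun X Y f => by
        refine h.subst_natural X Y f _ ?_ ?_
        · exact pullback.lift_fst _ _ _
        · exact pullback.lift_snd _ _ _ }
  refine ⟨Adjunction.mkOfUnitCounit
    { unit := un
      counit := co
      left_triangle := ?_
      right_triangle := ?_ }, fun Y => rfl, fun X => rfl⟩
  · ext Y
    have := ht2 Y ((Over.pullback p ⋙ Over.forget E).map (un.app Y))
      (pullback.lift_fst _ _ _) (pullback.lift_snd _ _ _)
    exact (congrArg _ (Category.id_comp _)).trans this
  · ext X
    have := ht1 X
    exact (congrArg _ (Category.id_comp _)).trans this
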